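/- Let A be a piecewise-Koszul algebra with period p and jump degree d, and let 0 → K → M → N → 0 be a short exact sequence of finitely generated graded A-modules. If K and N are piecewise-Koszul modules and both K and N are generated in the same degree s, then M is a piecewise-Koszul module. -/

import Mathlib

noncomputable section

/-- The jump function `δ^d_p(n) = ((n − (n mod p))/p)·d + (n mod p)`. -/
def jump (d p n : ℕ) : ℕ := (n - n % p) / p * d + n % p

/-- A positively graded `F`-algebra `A = ⊕_{i≥0} A_i`. -/
structure GradedAlg (F : Type) [Field F] where
  A : Type
  [ringA : Ring A]
  [algA : Algebra F A]
  grading : ℕ → Submodule F A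
  [graded : GradedAlgebra grading]

attribute [instance] GradedAlg.ringA GradedAlg.algA GradedAlg.graded

namespace GradedAlg

variable {F : Type} [Field F] (𝒜 : GradedAlg F)

/-- The graded Jacobson radical `J = ⊕_{i≥1} A_i`, i.e. the irrelevant ideal. -/
def jideal : Ideal 𝒜.A := (HomogeneousIdeal.irrelevant 𝒜.grading).toIdeal

/-- The standing assumptions: `A_0` is a semisimple Artin algebra, `A` is generated in
degrees 0 and 1 (`A_i · A_j = A_{i+j}`), and `A_1` is finite dimensional over `F`. -/
structure Standing : Prop where
  semisimple : IsSemisimpleRing ↥(𝒜.grading 0)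
  artinian : IsArtinianRing ↥(𝒜.grading 0)
  gen01 : ∀ i j : ℕ, 𝒜.grading i * 𝒜.grading j = 𝒜.grading (i + j)
  findim : FiniteDimensional F ↥(𝒜.grading 1)

/-- A (ℤ-)graded module over the graded algebra `𝒜`. -/
structure GMod where
  M : Type
  [acg : AddCommGroup M]
  [modF : Module F M]
  [modA : Module 𝒜.A M]
  [tower : IsScalarTower F 𝒜.A M]
  [scomm : SMulCommClass 𝒜.A F M]
  grading : ℤ → Submodule F M
  sup_eq_top : (⨆ j : ℤ, grading j) = ⊤
  indep : iSupIndep grading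
  smul_mem : ∀ {i : ℕ} {j : ℤ} {a : 𝒜.A} {m : M},
    a ∈ 𝒜.grading i → m ∈ grading j → a • m ∈ grading ((i : ℤ) + j)

attribute [instance] GMod.acg GMod.modF GMod.modA GMod.tower GMod.scomm

variable {𝒜}

/-- A degree-zero morphism of graded modules. -/
structure GHom (M N : 𝒜.GMod) where
  lin : M.M →ₗ[𝒜.A] N.M
  grad : ∀ (j : ℤ) (x : M.M), x ∈ M.grading j → lin x ∈ N.grading j

/-- A graded module is generated in degree `s` if `A · M_s = M`. -/
def GMod.GenInDeg (M : 𝒜.GMod) (s : ℤ) : Prop :=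
  Submodule.span 𝒜.A (M.grading s : Set M.M) = ⊤

/-- `T` is the trivial graded module `A_0 = A/J`, concentrated in degree `0`. -/
def IsTrivialGMod (T : 𝒜.GMod) : Prop :=
  (∀ j : ℤ, j ≠ 0 → T.grading j = ⊥) ∧
    Nonempty (T.M ≃ₗ[𝒜.A] (𝒜.A ⧸ 𝒜.jideal))

/-- A minimal graded projective resolution
`⋯ → P_{n+1} → P_n → ⋯ → P_0 → M → 0` of the graded module `M`,
with finitely generated terms. -/
structure MinRes (M : 𝒜.GMod) where
  P : ℕ → 𝒜.GMod
  d : ∀ n : ℕ, GHom (P (n + 1)) (P n)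
  aug : GHom (P 0) M
  fg : ∀ n, Module.Finite 𝒜.A (P n).M
  projective : ∀ n, Module.Projective 𝒜.A (P n).M
  aug_surj : Function.Surjective aug.lin
  exact_aug : LinearMap.range (d 0).lin = LinearMap.ker aug.lin
  exact : ∀ n, LinearMap.range (d (n + 1)).lin = LinearMap.ker (d n).lin
  minimal : ∀ n, LinearMap.range (d n).lin ≤ 𝒜.jideal • (⊤ : Submodule 𝒜.A (P n).M)

variable (𝒜)

/-- `M` is a piecewise-Koszul module (period `p`, jump degree `d`, shift `s`):
it has a minimal graded projective resolution with `P_n` generated in degree `δ^d_p(n) + s`. -/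
def IsPKMod (p d : ℕ) (s : ℤ) (M : 𝒜.GMod) : Prop :=
  ∃ R : MinRes M, ∀ n : ℕ, (R.P n).GenInDeg ((jump d p n : ℤ) + s)

/-- `A` is a piecewise-Koszul algebra (period `p`, jump degree `d`): the trivial module `T`
admits a minimal graded projective resolution with `P_n` generated in degree `δ^d_p(n)`. -/
def IsPKAlg (p d : ℕ) (T : 𝒜.GMod) : Prop := IsPKMod 𝒜 p d 0 T

/-- A Koszul module: a minimal graded projective resolution with `P_n` generated in degree `n`. -/
def IsKoszulMod (M : 𝒜.GMod) : Prop :=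
  ∃ R : MinRes M, ∀ n : ℕ, (R.P n).GenInDeg (n : ℤ)

variable {𝒜}

section Ext

variable (T : 𝒜.GMod) {M : 𝒜.GMod}

/-- The space of `A`-linear maps `P_n → T` (cochains). -/
abbrev HomSp (R : MinRes M) (n : ℕ) := (R.P n).M →ₗ[𝒜.A] T.M

/-- Precomposition, as an `F`-linear map on cochains. -/
def precompF {M₁ M₂ : 𝒜.GMod} (g : M₁.M →ₗ[𝒜.A] M₂.M) :
    (M₂.M →ₗ[𝒜.A] T.M) →ₗ[F] (M₁.M →ₗ[𝒜.A] T.M) where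
  toFun f := f ∘ₗ g
  map_add' f₁ f₂ := by ext x; simp
  map_smul' c f := by ext x; simp

/-- Cocycles: maps `P_n → T` vanishing on the image of `P_{n+1}`. -/
def cocyc (R : MinRes M) (n : ℕ) : Submodule F (HomSp T R n) :=
  LinearMap.ker (precompF T (R.d n).lin)

/-- Coboundaries: maps `P_n → T` factoring through `d_{n-1}`. -/
def cobound (R : MinRes M) : (n : ℕ) → Submodule F (HomSp T R n)
  | 0 => ⊥
  | n + 1 => LinearMap.range (precompF T (R.d n).lin)

/-- The coboundaries, viewed inside the cocycles. -/
def extRel (R : MinRes M) (n : ℕ) : Submodule F ↥(cocyc T R n) :=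
  (cobound T R n).comap (cocyc T R n).subtype

/-- `Ext^n_A(M, T)`, computed from the resolution `R` of `M`. -/
abbrev ExtQ (R : MinRes M) (n : ℕ) := ↥(cocyc T R n) ⧸ extRel T R n

/-- The class in `Ext^n_A(M,T)` of a cocycle. -/
def extCls {R : MinRes M} {n : ℕ} {f : HomSp T R n} (hf : f ∈ cocyc T R n) :
    ExtQ T R n :=
  Submodule.Quotient.mk ⟨f, hf⟩

/-- Cochains of shift-degree `j`: maps `P_n → T` vanishing on every `(P_n)_i` with `i ≠ j`. -/
def homDeg (R : MinRes M) (n : ℕ) (j : ℤ) : Submodule F (HomSp T R n) where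
  carrier := {f | ∀ i : ℤ, i ≠ j → ∀ x ∈ (R.P n).grading i, f x = 0}
  add_mem' := fun hf hg i hi x hx => by
    simp only [LinearMap.add_apply, hf i hi x hx, hg i hi x hx, add_zero]
  zero_mem' := fun i hi x hx => rfl
  smul_mem' := fun c f hf i hi x hx => by
    simp only [LinearMap.smul_apply, hf i hi x hx, smul_zero]

/-- The shift-degree `j` component `Ext^n_A(M,T)_j`. -/
def extComp (R : MinRes M) (n : ℕ) (j : ℤ) : Submodule F (ExtQ T R n) :=
  Submodule.map (extRel T R n).mkQ ((homDeg T R n j).comap (cocyc T R n).subtype)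

/-- Transport `Ext` along an equality of cohomological degrees. -/
def extCast (R : MinRes M) {a b : ℕ} (h : a = b) : ExtQ T R a ≃ₗ[F] ExtQ T R b :=
  h ▸ LinearEquiv.refl F (ExtQ T R a)

/-- A chain map lifting of a cochain `g : P_j → T` over the resolutions `RM` of `M`
and `RT` of `T`. -/
structure ChainLift (RT : MinRes T) (RM : MinRes M) (j : ℕ)
    (g : (RM.P j).M →ₗ[𝒜.A] T.M) where
  ℓ : ∀ m k : ℕ, m = k + j → ((RM.P m).M →ₗ[𝒜.A] (RT.P k).M)
  comm_aug : RT.aug.lin ∘ₗ ℓ j 0 (by omega) = g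
  comm : ∀ k : ℕ, (RT.d k).lin ∘ₗ ℓ (k + j + 1) (k + 1) (by omega) =
    ℓ (k + j) k rfl ∘ₗ (RM.d (k + j)).lin

/-- `μ` is the (bigraded family of) Yoneda product(s)
`Ext^i(T,T) ⊗ Ext^j(M,T) → Ext^{i+j}(M,T)`: it is computed by composing a cocycle
`f : P_i → T` with a chain lifting of a cocycle `g : Q_j → T`. -/
def IsYonedaMul (RT : MinRes T) (RM : MinRes M)
    (μ : ∀ i j : ℕ, ExtQ T RT i →ₗ[F] ExtQ T RM j →ₗ[F] ExtQ T RM (i + j)) : Prop :=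
  ∀ (i j : ℕ) (f : HomSp T RT i) (hf : f ∈ cocyc T RT i)
    (g : HomSp T RM j) (hg : g ∈ cocyc T RM j)
    (L : ChainLift T RT RM j g)
    (hc : f ∘ₗ L.ℓ (i + j) i (by omega) ∈ cocyc T RM (i + j)),
    μ i j (extCls T hf) (extCls T hg) = extCls T hc

/-- `E(A) = Ext^*_A(A_0,A_0)` is generated in the ext-degrees belonging to `S`. -/
def ExtGenIn (RT : MinRes T)
    (μ : ∀ i j : ℕ, ExtQ T RT i →ₗ[F] ExtQ T RT j →ₗ[F] ExtQ T RT (i + j))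
    (S : Set ℕ) : Prop :=
  ∀ W : (n : ℕ) → Submodule F (ExtQ T RT n),
    (∀ n ∈ S, W n = ⊤) →
    (∀ (i j : ℕ) (x : ExtQ T RT i) (y : ExtQ T RT j),
      x ∈ W i → y ∈ W j → μ i j x y ∈ W (i + j)) →
    ∀ n, W n = ⊤

/-- `E(M) = Ext^*_A(M,A_0)` is generated in degree `0` as a graded `E(A)`-module. -/
def ExtModGenInZero (RT : MinRes T) (RM : MinRes M)
    (μ : ∀ i j : ℕ, ExtQ T RT i →ₗ[F] ExtQ T RM j →ₗ[F] ExtQ T RM (i + j)) : Prop :=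
  ∀ W : (n : ℕ) → Submodule F (ExtQ T RM n),
    W 0 = ⊤ →
    (∀ (i j : ℕ) (x : ExtQ T RT i) (y : ExtQ T RM j),
      y ∈ W j → μ i j x y ∈ W (i + j)) →
    ∀ n, W n = ⊤

end Ext

/-- `JM` is (a graded module isomorphic to) the submodule `J·M` of `M`. -/
def IsJM (M JM : 𝒜.GMod) : Prop :=
  ∃ e : JM.M ≃ₗ[𝒜.A] ↥(𝒜.jideal • (⊤ : Submodule 𝒜.A M.M)),
    ∀ (j : ℤ) (x : JM.M), x ∈ JM.grading j ↔ ((e x : M.M) ∈ M.grading j)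

/-- `Q` is (a graded module isomorphic to) the quotient `M/JM`. -/
def IsQuotJM (M Q : 𝒜.GMod) : Prop :=
  ∃ e : Q.M ≃ₗ[𝒜.A] (M.M ⧸ (𝒜.jideal • (⊤ : Submodule 𝒜.A M.M))),
    ∀ j : ℤ, Q.grading j = Submodule.map
      ((e.symm.toLinearMap ∘ₗ (𝒜.jideal • (⊤ : Submodule 𝒜.A M.M)).mkQ).restrictScalars F)
      (M.grading j)

/-- `W` is (isomorphic to) the `n`-th syzygy `Ω^n(M)` of `M` in the minimal graded
projective resolution `R`. -/
def IsSyzygy {M : 𝒜.GMod} (R : MinRes M) : ℕ → 𝒜.GMod → Prop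
  | 0, W => ∃ e : W.M ≃ₗ[𝒜.A] M.M,
      ∀ (j : ℤ) (x : W.M), x ∈ W.grading j ↔ e x ∈ M.grading j
  | 1, W => ∃ e : W.M ≃ₗ[𝒜.A] ↥(LinearMap.ker R.aug.lin),
      ∀ (j : ℤ) (x : W.M), x ∈ W.grading j ↔ ((e x : (R.P 0).M) ∈ (R.P 0).grading j)
  | (n + 2), W => ∃ e : W.M ≃ₗ[𝒜.A] ↥(LinearMap.ker (R.d n).lin),
      ∀ (j : ℤ) (x : W.M), x ∈ W.grading j ↔ ((e x : (R.P (n + 1)).M) ∈ (R.P (n + 1)).grading j)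

end GradedAlg

/-!
By the horseshoe lemma, resolutions `P` of `K` and `Q` of `N` combine into a resolution of `M` with
terms `P_n ⊕ Q_n`. The connecting maps `Q_{n+1} → P_n` can be chosen of degree zero, because the
degree-zero part of an `A`-linear lift of a graded map is again a lift. Minimality is then a matter
of degrees: `δ^d_p` is strictly increasing, and a degree-zero map into a module `X` generated in
degree `s`, from a module generated in a degree other than `s`, has image in `J X`.
-/

section LinearAlgebra

variable {R X Y : Type*} [Semiring R] [AddCommMonoid X] [AddCommMonoid Y] [Module R X] [Module R Y]

theorem iSup_submodule_prod {ι : Sort*} (p : ι → Submodule R X) (q : ι → Submodule R Y) :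
    ⨆ i, (p i).prod (q i) = (⨆ i, p i).prod (⨆ i, q i) := by
  simp only [LinearMap.prod_eq_sup_map, iSup_sup_eq, Submodule.map_iSup]

theorem iSupIndep_submodule_prod {ι : Type*} {p : ι → Submodule R X} {q : ι → Submodule R Y}
    (hp : iSupIndep p) (hq : iSupIndep q) : iSupIndep fun i => (p i).prod (q i) := fun i => by
  simp only [iSup_submodule_prod, disjoint_iff, Submodule.prod_inf_prod, (hp i).eq_bot,
    (hq i).eq_bot, Submodule.prod_bot]

end LinearAlgebra

section Exactness

open Function

variable {R X₂ X₁ X₀ Y₂ Y₁ Y₀ E : Type*} [Ring R]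
  [AddCommGroup X₂] [AddCommGroup X₁] [AddCommGroup X₀]
  [AddCommGroup Y₂] [AddCommGroup Y₁] [AddCommGroup Y₀] [AddCommGroup E]
  [Module R X₂] [Module R X₁] [Module R X₀]
  [Module R Y₂] [Module R Y₁] [Module R Y₀] [Module R E]
  {a₁ : X₂ →ₗ[R] X₁} {a₀ : X₁ →ₗ[R] X₀} {b₁ : Y₂ →ₗ[R] Y₁} {b₀ : Y₁ →ₗ[R] Y₀}
  {i : X₀ →ₗ[R] E} {q : E →ₗ[R] Y₀} {h : Y₁ →ₗ[R] E} {t : Y₂ →ₗ[R] X₁}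

theorem surjective_coprod_of_exact (hiq : Exact i q) (ha : Surjective a₀) (hb : Surjective b₀)
    (hqh : q ∘ₗ h = b₀) : Surjective ((i ∘ₗ a₀).coprod h) := by
  intro e
  obtain ⟨y, hy⟩ := hb (q e)
  have hker : q (e - h y) = 0 := by
    rw [map_sub, ← LinearMap.comp_apply q h, hqh, hy, sub_self]
  obtain ⟨x₀, hx₀⟩ := (hiq _).mp hker
  obtain ⟨x, rfl⟩ := ha x₀
  exact ⟨(x, y), by simp [hx₀]⟩

theorem exact_coprod_of_exact (hi : Injective i) (hqi : q ∘ₗ i = 0) (ha : Exact a₁ a₀)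
    (hb : Exact b₁ b₀) (hqh : q ∘ₗ h = b₀) (ht : i ∘ₗ a₀ ∘ₗ t = -(h ∘ₗ b₁)) :
    Exact ((LinearMap.inl R X₁ Y₁ ∘ₗ a₁).coprod (t.prod b₁)) ((i ∘ₗ a₀).coprod h) := by
  replace ht (y : Y₂) : i (a₀ (t y)) = -h (b₁ y) := LinearMap.congr_fun ht y
  refine LinearMap.exact_of_comp_of_mem_range ?_ ?_
  · ext <;> simp [ht, ha.apply_apply_eq_zero]
  · rintro ⟨x, y⟩ hxy
    replace hxy : i (a₀ x) + h y = 0 := hxy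
    have hy : b₀ y = 0 := by
      have hq := congrArg q hxy
      rwa [map_add, map_zero, ← LinearMap.comp_apply q i, hqi, LinearMap.zero_apply, zero_add,
        ← LinearMap.comp_apply q h, hqh] at hq
    obtain ⟨y', rfl⟩ := (hb y).mp hy
    have hx : a₀ (x - t y') = 0 := hi (by rw [map_sub, map_sub, ht, sub_neg_eq_add, hxy, map_zero])
    obtain ⟨x', hx'⟩ := (ha _).mp hx
    exact ⟨(x', y'), by simp [hx']⟩

end Exactness

section Jump

variable {d p : ℕ}

theorem jump_mul_add {r : ℕ} (hr : r < p) (q : ℕ) : jump d p (p * q + r) = q * d + r := by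
  rw [jump, ← Nat.div_eq_sub_mod_div, Nat.mul_add_mod, Nat.mod_eq_of_lt hr,
    Nat.mul_add_div (by omega), Nat.div_eq_of_lt hr, add_zero]

theorem jump_strictMono (hp : 0 < p) (hpd : p ≤ d) : StrictMono (jump d p) := by
  refine strictMono_nat_of_lt_succ fun n => ?_
  have hr := Nat.mod_lt n hp
  rw [← Nat.div_add_mod n p, jump_mul_add hr, add_assoc]
  obtain hlt | heq : n % p + 1 < p ∨ n % p + 1 = p := by omega
  · rw [jump_mul_add hlt]
    omega
  · have hwrap := jump_mul_add (d := d) hp (n / p + 1)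
    rw [add_zero, mul_add_one, add_mul] at hwrap
    rw [heq, hwrap]
    omega

end Jump

namespace GradedAlg

variable {F : Type} [Field F] {𝒜 : GradedAlg F}

namespace GMod

instance (X : 𝒜.GMod) : DirectSum.Decomposition X.grading :=
  (DirectSum.isInternal_submodule_of_iSupIndep_of_iSup_eq_top X.indep
    X.sup_eq_top).chooseDecomposition

/-- The projection of a graded module onto its component of degree `j`, as an endomorphism. -/
def proj (X : 𝒜.GMod) (j : ℤ) : X.M →ₗ[F] X.M :=
  (X.grading j).subtype ∘ₗ DirectSum.component F ℤ (fun i => X.grading i) j ∘ₗ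
    (DirectSum.decomposeLinearEquiv X.grading).toLinearMap

variable {X Y : 𝒜.GMod}

theorem proj_mem (j : ℤ) (x : X.M) : X.proj j x ∈ X.grading j :=
  (DirectSum.decompose X.grading x j).2

theorem proj_of_mem {j : ℤ} {x : X.M} (hx : x ∈ X.grading j) : X.proj j x = x :=
  DirectSum.decompose_of_mem_same X.grading hx

theorem proj_of_mem_ne {i j : ℤ} {x : X.M} (hx : x ∈ X.grading i) (hij : i ≠ j) :
    X.proj j x = 0 :=
  DirectSum.decompose_of_mem_ne X.grading hx hij

theorem proj_smul {i : ℕ} {a : 𝒜.A} (ha : a ∈ 𝒜.grading i) (j : ℤ) (x : X.M) :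
    X.proj (i + j) (a • x) = a • X.proj j x := by
  induction x using DirectSum.Decomposition.inductionOn X.grading with
  | zero => simp only [smul_zero, map_zero]
  | add x y hx hy => simp only [smul_add, map_add, hx, hy]
  | @homogeneous k x =>
    obtain rfl | hkj := eq_or_ne k j
    · rw [proj_of_mem x.2, proj_of_mem (X.smul_mem ha x.2)]
    · rw [proj_of_mem_ne x.2 hkj, proj_of_mem_ne (X.smul_mem ha x.2) (by omega), smul_zero]

theorem map_smul_of_homogeneous (φ : X.M →ₗ[F] Y.M)
    (hφ : ∀ (i : ℕ) (j : ℤ), ∀ a ∈ 𝒜.grading i, ∀ x ∈ X.grading j, φ (a • x) = a • φ x)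
    (a : 𝒜.A) (x : X.M) : φ (a • x) = a • φ x := by
  induction x using DirectSum.Decomposition.inductionOn X.grading with
  | zero => simp only [smul_zero, map_zero]
  | add x y hx hy => simp only [smul_add, map_add, hx, hy]
  | homogeneous x =>
    induction a using DirectSum.Decomposition.inductionOn 𝒜.grading with
    | zero => simp only [zero_smul, map_zero]
    | add a b ha hb => simp only [add_smul, map_add, ha, hb]
    | homogeneous a => exact hφ _ _ a a.2 x x.2

/-- The direct sum of two graded modules. -/
def prod (X Y : 𝒜.GMod) : 𝒜.GMod where
  M := X.M × Y.M
  grading j := (X.grading j).prod (Y.grading j)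
  sup_eq_top := by rw [iSup_submodule_prod, X.sup_eq_top, Y.sup_eq_top, Submodule.prod_top]
  indep := iSupIndep_submodule_prod X.indep Y.indep
  smul_mem ha hm := ⟨X.smul_mem ha hm.1, Y.smul_mem ha hm.2⟩

theorem GenInDeg.prod {s : ℤ} (hX : X.GenInDeg s) (hY : Y.GenInDeg s) :
    (X.prod Y).GenInDeg s := by
  rw [GenInDeg] at hX hY
  change Submodule.span 𝒜.A ((X.grading s : Set X.M) ×ˢ (Y.grading s : Set Y.M)) = ⊤
  rw [Submodule.span_prod_eq 𝒜.A (zero_mem _) (zero_mem _), hX, hY, Submodule.prod_top]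

end GMod

namespace GHom

variable {X Y Z : 𝒜.GMod}

theorem map_proj (g : GHom X Y) (j : ℤ) (x : X.M) : g.lin (X.proj j x) = Y.proj j (g.lin x) := by
  induction x using DirectSum.Decomposition.inductionOn X.grading with
  | zero => simp only [map_zero]
  | add x y hx hy => simp only [map_add, hx, hy]
  | @homogeneous k x =>
    have hgx := g.grad k x x.2
    obtain rfl | hkj := eq_or_ne k j
    · rw [GMod.proj_of_mem x.2, GMod.proj_of_mem hgx]
    · rw [GMod.proj_of_mem_ne x.2 hkj, GMod.proj_of_mem_ne hgx hkj, map_zero]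

/-- The composite of two morphisms of graded modules. -/
def comp (g : GHom Y Z) (f : GHom X Y) : GHom X Z where
  lin := g.lin ∘ₗ f.lin
  grad j x hx := g.grad j _ (f.grad j x hx)

/-- The negative of a morphism of graded modules. -/
def neg (g : GHom X Y) : GHom X Y where
  lin := -g.lin
  grad j x hx := neg_mem (g.grad j x hx)

/-- The inclusion of the first summand of a direct sum of graded modules. -/
def inl (X Y : 𝒜.GMod) : GHom X (X.prod Y) where
  lin := LinearMap.inl 𝒜.A X.M Y.M
  grad _ _ hx := ⟨hx, zero_mem _⟩

/-- The morphism into a direct sum of graded modules with given components. -/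
def prod (f : GHom Z X) (g : GHom Z Y) : GHom Z (X.prod Y) where
  lin := LinearMap.prod f.lin g.lin
  grad j z hz := ⟨f.grad j z hz, g.grad j z hz⟩

/-- The morphism out of a direct sum of graded modules with given restrictions. -/
def coprod (f : GHom X Z) (g : GHom Y Z) : GHom (X.prod Y) Z where
  lin := LinearMap.coprod f.lin g.lin
  grad j _ hx := add_mem (f.grad j _ hx.1) (g.grad j _ hx.2)

end GHom

/-- The map acting on `X_j` as `h` followed by the projection onto `Y_j`, as an `F`-linear map;
it is `A`-linear, see `degreeZeroPart`. -/
def degreeZeroMap {X Y : 𝒜.GMod} (h : X.M →ₗ[𝒜.A] Y.M) : X.M →ₗ[F] Y.M :=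
  DirectSum.toModule F ℤ Y.M
      (fun j => Y.proj j ∘ₗ h.restrictScalars F ∘ₗ (X.grading j).subtype) ∘ₗ
    (DirectSum.decomposeLinearEquiv X.grading).toLinearMap

theorem degreeZeroMap_of_mem {X Y : 𝒜.GMod} (h : X.M →ₗ[𝒜.A] Y.M) {j : ℤ} {x : X.M}
    (hx : x ∈ X.grading j) : degreeZeroMap h x = Y.proj j (h x) := by
  lift x to X.grading j using hx
  simp [degreeZeroMap]

/-- The degree-zero component of a linear map between graded modules. -/
def degreeZeroPart {X Y : 𝒜.GMod} (h : X.M →ₗ[𝒜.A] Y.M) : GHom X Y where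
  lin :=
    { degreeZeroMap h with
      map_smul' := GMod.map_smul_of_homogeneous _ fun i j a ha x hx => by
        rw [degreeZeroMap_of_mem h (X.smul_mem ha hx), degreeZeroMap_of_mem h hx, map_smul,
          GMod.proj_smul ha] }
  grad j x hx := by
    change degreeZeroMap h x ∈ Y.grading j
    rw [degreeZeroMap_of_mem h hx]
    exact GMod.proj_mem j (h x)

theorem comp_degreeZeroPart {X Y Z : 𝒜.GMod} (e : GHom Y Z) (h : X.M →ₗ[𝒜.A] Y.M) (g : GHom X Z)
    (hg : e.lin ∘ₗ h = g.lin) : e.lin ∘ₗ (degreeZeroPart h).lin = g.lin := by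
  ext x
  induction x using DirectSum.Decomposition.inductionOn X.grading with
  | zero => simp only [map_zero]
  | add x y hx hy => simp only [map_add, hx, hy]
  | @homogeneous j x =>
    change e.lin (degreeZeroMap h x) = g.lin x
    rw [degreeZeroMap_of_mem h x.2, e.map_proj, ← LinearMap.comp_apply, hg,
      GMod.proj_of_mem (g.grad j x x.2)]

theorem exists_lift_of_range_le {P X Y : 𝒜.GMod} [Module.Projective 𝒜.A P.M] (e : GHom X Y)
    (g : GHom P Y) (hr : LinearMap.range g.lin ≤ LinearMap.range e.lin) :
    ∃ h : GHom P X, e.lin ∘ₗ h.lin = g.lin := by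
  obtain ⟨h, hh⟩ := Module.projective_lifting_property e.lin.rangeRestrict
    (g.lin.codRestrict (LinearMap.range e.lin) fun x => hr ⟨x, rfl⟩) e.lin.surjective_rangeRestrict
  refine ⟨degreeZeroPart h, comp_degreeZeroPart e h g ?_⟩
  ext x
  exact congrArg Subtype.val (LinearMap.congr_fun hh x)

theorem exists_chainMap_lift {X Y : ℕ → 𝒜.GMod} (dX : ∀ n, GHom (X (n + 1)) (X n))
    (dY : ∀ n, GHom (Y (n + 1)) (Y n))
    (hX : ∀ n, Function.Exact (dX (n + 1)).lin (dX n).lin)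
    (hY : ∀ n, (dY n).lin ∘ₗ (dY (n + 1)).lin = 0)
    (hproj : ∀ n, Module.Projective 𝒜.A (Y (n + 1)).M) (t₀ : GHom (Y 0) (X 0))
    (ht₀ : LinearMap.range (t₀.comp (dY 0)).lin ≤ LinearMap.range (dX 0).lin) :
    ∃ t : ∀ n, GHom (Y n) (X n), t 0 = t₀ ∧
      ∀ n, (dX n).lin ∘ₗ (t (n + 1)).lin = (t n).lin ∘ₗ (dY n).lin := by
  let Liftable (n : ℕ) := {t : GHom (Y n) (X n) //
    LinearMap.range (t.comp (dY n)).lin ≤ LinearMap.range (dX n).lin}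
  have step (n : ℕ) (t : Liftable n) :
      ∃ t' : Liftable (n + 1), (dX n).lin ∘ₗ t'.1.lin = t.1.lin ∘ₗ (dY n).lin := by
    obtain ⟨t', ht'⟩ := exists_lift_of_range_le (dX n) (t.1.comp (dY n)) t.2
    refine ⟨⟨t', ?_⟩, ht'⟩
    rw [← (hX n).linearMap_ker_eq, LinearMap.range_le_ker_iff]
    calc (dX n).lin ∘ₗ t'.lin ∘ₗ (dY (n + 1)).lin
        = ((dX n).lin ∘ₗ t'.lin) ∘ₗ (dY (n + 1)).lin := rfl
      _ = t.1.lin ∘ₗ (dY n).lin ∘ₗ (dY (n + 1)).lin := by rw [ht']; rfl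
      _ = 0 := by rw [hY, LinearMap.comp_zero]
  choose next hnext using step
  let t (n : ℕ) : Liftable n := Nat.rec ⟨t₀, ht₀⟩ next n
  exact ⟨fun n => (t n).1, rfl, fun n => hnext n (t n)⟩

theorem GMod.GenInDeg.proj_mem_jideal_smul {X : 𝒜.GMod} {s j : ℤ} (hX : X.GenInDeg s)
    (hsj : s ≠ j) (x : X.M) : X.proj j x ∈ 𝒜.jideal • (⊤ : Submodule 𝒜.A X.M) := by
  have hx : x ∈ Submodule.span 𝒜.A (X.grading s : Set X.M) := hX ▸ Submodule.mem_top
  induction hx using Submodule.closure_induction with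
  | zero => simp only [map_zero, zero_mem]
  | add x y _ _ hx hy => simpa only [map_add] using add_mem hx hy
  | smul_mem a x hx =>
    induction a using DirectSum.Decomposition.inductionOn 𝒜.grading with
    | zero => simp only [zero_smul, map_zero, zero_mem]
    | add a b ha hb => simpa only [add_smul, map_add] using add_mem ha hb
    | @homogeneous i a =>
      obtain hij | hij := eq_or_ne ((i : ℤ) + s) j
      · rw [← hij, proj_smul a.2]
        have ha : (a : 𝒜.A) ∈ 𝒜.jideal :=
          HomogeneousIdeal.mem_irrelevant_of_mem 𝒜.grading (by omega) a.2
        exact Submodule.smul_mem_smul ha Submodule.mem_top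
      · rw [proj_of_mem_ne (X.smul_mem a.2 hx) hij]
        exact zero_mem _

theorem GHom.range_le_jideal_smul {X Y : 𝒜.GMod} {s t : ℤ} (g : GHom Y X) (hY : Y.GenInDeg t)
    (hX : X.GenInDeg s) (hst : s ≠ t) :
    LinearMap.range g.lin ≤ 𝒜.jideal • (⊤ : Submodule 𝒜.A X.M) := by
  rw [LinearMap.range_eq_map, ← (show Submodule.span 𝒜.A (Y.grading t : Set Y.M) = ⊤ from hY),
    Submodule.map_span_le]
  intro y hy
  rw [← GMod.proj_of_mem (g.grad t y hy)]
  exact hX.proj_mem_jideal_smul hst _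

namespace MinRes

variable {M : 𝒜.GMod} (R : MinRes M)

theorem exact_d_aug : Function.Exact (R.d 0).lin R.aug.lin :=
  LinearMap.exact_iff.mpr R.exact_aug.symm

theorem exact_d_d (n : ℕ) : Function.Exact (R.d (n + 1)).lin (R.d n).lin :=
  LinearMap.exact_iff.mpr (R.exact n).symm

end MinRes

/-- The data assembling resolutions `P` of `K` and `Q` of `N` into a resolution of `M` with terms
`P_n ⊕ Q_n` (horseshoe lemma), for morphisms `f : K → M` and `g : M → N`: the restriction `σ` to
`Q_0` of the augmentation, and the components `τ_n : Q_{n+1} → P_n` of the differentials. -/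
structure Horseshoe {K M N : 𝒜.GMod} (f : GHom K M) (g : GHom M N) (P : MinRes K)
    (Q : MinRes N) where
  σ : GHom (Q.P 0) M
  τ : ∀ n, GHom (Q.P (n + 1)) (P.P n)
  g_comp_σ : g.lin ∘ₗ σ.lin = Q.aug.lin
  aug_comp_τ : f.lin ∘ₗ P.aug.lin ∘ₗ (τ 0).lin = -(σ.lin ∘ₗ (Q.d 0).lin)
  d_comp_τ : ∀ n, (P.d n).lin ∘ₗ (τ (n + 1)).lin = -((τ n).lin ∘ₗ (Q.d (n + 1)).lin)

namespace Horseshoe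

variable {K M N : 𝒜.GMod} {f : GHom K M} {g : GHom M N} {P : MinRes K} {Q : MinRes N}

theorem exists_σ_τ_zero (P : MinRes K) (Q : MinRes N) (hg : Function.Surjective g.lin)
    (hfg : Function.Exact f.lin g.lin) :
    ∃ (σ : GHom (Q.P 0) M) (τ₀ : GHom (Q.P 1) (P.P 0)), g.lin ∘ₗ σ.lin = Q.aug.lin ∧
      f.lin ∘ₗ P.aug.lin ∘ₗ τ₀.lin = -(σ.lin ∘ₗ (Q.d 0).lin) := by
  have := Q.projective
  obtain ⟨σ, hσ⟩ := exists_lift_of_range_le g Q.aug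
    (le_top.trans_eq (LinearMap.range_eq_top.mpr hg).symm)
  have hrange : LinearMap.range (f.comp P.aug).lin = LinearMap.ker g.lin := by
    rw [hfg.linearMap_ker_eq]
    exact LinearMap.range_comp_of_range_eq_top _ (LinearMap.range_eq_top.mpr P.aug_surj)
  have hσd : LinearMap.range (σ.comp (Q.d 0).neg).lin ≤ LinearMap.range (f.comp P.aug).lin := by
    rw [hrange, LinearMap.range_le_ker_iff]
    calc g.lin ∘ₗ σ.lin ∘ₗ (-(Q.d 0).lin) = (g.lin ∘ₗ σ.lin) ∘ₗ (-(Q.d 0).lin) := rfl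
      _ = 0 := by rw [hσ, LinearMap.comp_neg, Q.exact_d_aug.linearMap_comp_eq_zero, neg_zero]
  obtain ⟨τ₀, hτ₀⟩ := exists_lift_of_range_le (f.comp P.aug) (σ.comp (Q.d 0).neg) hσd
  exact ⟨σ, τ₀, hσ, hτ₀.trans (LinearMap.comp_neg _ _)⟩

theorem nonempty (P : MinRes K) (Q : MinRes N) (hf : Function.Injective f.lin)
    (hg : Function.Surjective g.lin) (hfg : Function.Exact f.lin g.lin) :
    Nonempty (Horseshoe f g P Q) := by
  obtain ⟨σ, τ₀, hσ, hτ₀⟩ := exists_σ_τ_zero P Q hg hfg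
  have hτ₀d : LinearMap.range (τ₀.comp (Q.d 1).neg).lin ≤ LinearMap.range (P.d 0).lin := by
    rw [P.exact_aug, LinearMap.range_le_ker_iff, ← LinearMap.cancel_left hf, LinearMap.comp_zero]
    calc f.lin ∘ₗ P.aug.lin ∘ₗ τ₀.lin ∘ₗ (-(Q.d 1).lin)
        = (f.lin ∘ₗ P.aug.lin ∘ₗ τ₀.lin) ∘ₗ (-(Q.d 1).lin) := rfl
      _ = σ.lin ∘ₗ (Q.d 0).lin ∘ₗ (Q.d 1).lin := by
        rw [hτ₀, LinearMap.neg_comp, LinearMap.comp_neg, neg_neg, LinearMap.comp_assoc]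
      _ = 0 := by rw [(Q.exact_d_d 0).linearMap_comp_eq_zero, LinearMap.comp_zero]
  have hdd (n : ℕ) : (Q.d (n + 1)).neg.lin ∘ₗ (Q.d (n + 2)).neg.lin = 0 := by
    change (-(Q.d (n + 1)).lin) ∘ₗ (-(Q.d (n + 2)).lin) = 0
    rw [LinearMap.neg_comp, LinearMap.comp_neg, neg_neg,
      (Q.exact_d_d (n + 1)).linearMap_comp_eq_zero]
  obtain ⟨τ, rfl, hτ⟩ := exists_chainMap_lift (Y := fun n => Q.P (n + 1)) P.d
    (fun n => (Q.d (n + 1)).neg) P.exact_d_d hdd (fun n => Q.projective (n + 2)) τ₀ hτ₀d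
  exact ⟨⟨σ, τ, hσ, hτ₀, fun n => (hτ n).trans (LinearMap.comp_neg _ _)⟩⟩

variable (H : Horseshoe f g P Q)

/-- The augmentation `P_0 ⊕ Q_0 → M` of the horseshoe resolution. -/
def aug : GHom ((P.P 0).prod (Q.P 0)) M :=
  (f.comp P.aug).coprod H.σ

/-- The differential `(x, y) ↦ (d x + τ y, d y)` of the horseshoe resolution. -/
def d (n : ℕ) : GHom ((P.P (n + 1)).prod (Q.P (n + 1))) ((P.P n).prod (Q.P n)) :=
  ((GHom.inl _ _).comp (P.d n)).coprod ((H.τ n).prod (Q.d n))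

theorem aug_surjective (hfg : Function.Exact f.lin g.lin) : Function.Surjective H.aug.lin :=
  surjective_coprod_of_exact hfg P.aug_surj Q.aug_surj H.g_comp_σ

theorem exact_d_aug (hf : Function.Injective f.lin) (hfg : Function.Exact f.lin g.lin) :
    Function.Exact (H.d 0).lin H.aug.lin :=
  exact_coprod_of_exact hf hfg.linearMap_comp_eq_zero P.exact_d_aug Q.exact_d_aug H.g_comp_σ
    H.aug_comp_τ

theorem exact_d_d (n : ℕ) : Function.Exact (H.d (n + 1)).lin (H.d n).lin := by
  refine exact_coprod_of_exact LinearMap.inl_injective (LinearMap.snd_comp_inl _ _ _)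
    (P.exact_d_d n) (Q.exact_d_d n) (LinearMap.snd_prod _ _) ?_
  ext y
  refine Prod.ext (LinearMap.congr_fun (H.d_comp_τ n) y) ?_
  change 0 = -(Q.d n).lin ((Q.d (n + 1)).lin y)
  rw [(Q.exact_d_d n).apply_apply_eq_zero, neg_zero]

/-- The horseshoe resolution of `M`, with terms `P_n ⊕ Q_n`, when it is minimal. -/
def minRes (hf : Function.Injective f.lin) (hfg : Function.Exact f.lin g.lin)
    (hmin : ∀ n, LinearMap.range (H.d n).lin ≤ 𝒜.jideal • ⊤) : MinRes M where
  P n := (P.P n).prod (Q.P n)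
  d := H.d
  aug := H.aug
  fg n :=
    have := P.fg n
    have := Q.fg n
    inferInstanceAs (Module.Finite 𝒜.A ((P.P n).M × (Q.P n).M))
  projective n :=
    have := P.projective n
    have := Q.projective n
    inferInstanceAs (Module.Projective 𝒜.A ((P.P n).M × (Q.P n).M))
  aug_surj := H.aug_surjective hfg
  exact_aug := (H.exact_d_aug hf hfg).linearMap_ker_eq.symm
  exact n := (H.exact_d_d n).linearMap_ker_eq.symm
  minimal := hmin

end Horseshoe

theorem exists_minRes_of_extension {K M N : 𝒜.GMod} {f : GHom K M} {g : GHom M N}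
    (hf : Function.Injective f.lin) (hg : Function.Surjective g.lin)
    (hfg : Function.Exact f.lin g.lin) (P : MinRes K) (Q : MinRes N) {δ : ℕ → ℤ}
    (hδ : ∀ n, δ n ≠ δ (n + 1)) (hP : ∀ n, (P.P n).GenInDeg (δ n))
    (hQ : ∀ n, (Q.P n).GenInDeg (δ n)) :
    ∃ R : MinRes M, ∀ n, (R.P n).GenInDeg (δ n) := by
  obtain ⟨H⟩ := Horseshoe.nonempty P Q hf hg hfg
  have hgen (n : ℕ) : ((P.P n).prod (Q.P n)).GenInDeg (δ n) := (hP n).prod (hQ n)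
  have hmin (n : ℕ) := (H.d n).range_le_jideal_smul (hgen (n + 1)) (hgen n) (hδ n)
  exact ⟨H.minRes hf hfg hmin, hgen⟩

end GradedAlg

open GradedAlg in
theorem isPKMod_of_extension_general {F : Type} [Field F] {𝒜 : GradedAlg F} {p d : ℕ}
    (hp : 0 < p) (hpd : p ≤ d) {K M N : 𝒜.GMod} {f : GHom K M} {g : GHom M N}
    (hf : Function.Injective f.lin) (hg : Function.Surjective g.lin)
    (hexact : LinearMap.range f.lin = LinearMap.ker g.lin)
    {s : ℤ} (hK : 𝒜.IsPKMod p d s K) (hN : 𝒜.IsPKMod p d s N) :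
    𝒜.IsPKMod p d s M := by
  obtain ⟨P, hP⟩ := hK
  obtain ⟨Q, hQ⟩ := hN
  refine exists_minRes_of_extension hf hg (LinearMap.exact_iff.mpr hexact.symm) P Q (fun n => ?_)
    hP hQ
  have hlt := jump_strictMono hp hpd n.lt_add_one
  omega

open GradedAlg in
/-- **Proposition (extension closure).** Let `0 → K → M → N → 0` be a short exact
sequence of finitely generated graded `A`-modules over a piecewise-Koszul algebra `A`.
If `K` and `N` are piecewise-Koszul modules generated in the same degree `s`, then `M`
is a piecewise-Koszul module. -/
theorem isPKMod_of_extension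
    {F : Type} [Field F] (𝒜 : GradedAlg F) (hA : 𝒜.Standing)
    (p d : ℕ) (hp : 2 ≤ p) (hpd : p ≤ d)
    (T : 𝒜.GMod) (hT : IsTrivialGMod T) (hpk : 𝒜.IsPKAlg p d T)
    (K M N : 𝒜.GMod)
    (hKfg : Module.Finite 𝒜.A K.M) (hMfg : Module.Finite 𝒜.A M.M)
    (hNfg : Module.Finite 𝒜.A N.M)
    (f : GHom K M) (g : GHom M N)
    (hf : Function.Injective f.lin) (hg : Function.Surjective g.lin)
    (hexact : LinearMap.range f.lin = LinearMap.ker g.lin)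
    (s : ℤ) (hKs : K.GenInDeg s) (hNs : N.GenInDeg s)
    (hK : 𝒜.IsPKMod p d s K) (hN : 𝒜.IsPKMod p d s N) :
    𝒜.IsPKMod p d s M := by
  exact isPKMod_of_extension_general (by omega) hpd hf hg hexact hK hN
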